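/- Let q, δ > 0 and 0 < Φ < φ be real numbers, let 𝕎 : ℝ → ℝ vanish on (−∞,0) and be continuous on [0,∞), define f(t) = 𝕎(−t) + (Φ−φ)·∫_t^0 e^{−Φ(t−z)}·𝕎(−z) dz for t ≤ 0, and define k : ℝ → ℝ by k(z) = (q(φ−Φ)/(φδ))·e^{−Φz} for z ≥ 0 and k(z) = (q(φ−Φ)/(φδ))·e^{−Φz} − (qΦ/φ)·f(z) for z < 0. Then for all reals b, x, y with b ≤ x ≤ y: (φ/Φ)·k(y−x) + ∫_{b−x}^{y−x} (φ(Φ−φ)/Φ)·e^{−φ(y−x−z)}·k(z) dz = (q(φ−Φ)/(δΦ))·e^{φ(b−y)}·e^{Φ(x−b)}·( 1 + δΦ·∫_{b−x}^0 e^{Φz}·𝕎(−z) dz ). -/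

import Mathlib

/-! The Volterra operator `(Tv)(t) = v(t) + (α - β) ∫_t^m e^{-α(t - z)} v(z) dz` turns
exponentially weighted tail integrals with rate `α` into those with rate `β`:
`∫_a^m e^{β(z - a)} (Tv)(z) dz = ∫_a^m e^{α(z - a)} v(z) dz`, by one integration by parts.
Here `f = Tv` for `v(z) = 𝕎(-z)`, `α = Φ`, `β = φ`, `m = 0`. When `e^{-φ(c - z)} k(z)` is integrated
over `[a, c]` with `a = b - x ≤ 0 ≤ c = y - x`, the `f`-part of `k` therefore yields the integral of
`e^{Φz} 𝕎(-z)`, while the exponential part, combined with the boundary term `(φ/Φ) k(c)`, leaves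
only its contribution from the endpoint `a`. -/

open MeasureTheory Real Set Filter

theorem integral_mul_sub_deriv_mul_integral {u h : ℝ → ℝ} {a b : ℝ}
    (hu : AbsolutelyContinuousOnInterval u a b) (hh : IntervalIntegrable h volume a b) :
    ∫ z in a..b, (u z * h z - deriv u z * ∫ s in z..b, h s) = u a * ∫ z in a..b, h z := by
  let H : ℝ → ℝ := fun z ↦ ∫ s in b..z, h s
  have hH : AbsolutelyContinuousOnInterval H a b :=
    hh.absolutelyContinuousOnInterval_intervalIntegral right_mem_uIcc
  have tail : ∀ z, ∫ s in z..b, h s = -H z := fun z ↦ intervalIntegral.integral_symm b z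
  calc ∫ z in a..b, (u z * h z - deriv u z * ∫ s in z..b, h s)
      = ∫ z in a..b, (deriv u z * H z + u z * deriv H z) := by
        refine intervalIntegral.integral_congr_ae ?_
        filter_upwards [hh.ae_hasDerivAt_integral] with z hz hzab
        have deriv_H : deriv H z = h z := (hz (uIoc_subset_uIcc hzab) b right_mem_uIcc).deriv
        rw [tail, deriv_H]
        ring
    _ = u b * H b - u a * H a := hu.integral_deriv_mul_eq_sub hH
    _ = u a * ∫ z in a..b, h z := by
        rw [tail, show H b = 0 from intervalIntegral.integral_same]
        ring

theorem sub_mul_integral_exp_mul_exp (α β a c : ℝ) :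
    (β - α) * ∫ z in a..c, exp (-β * (c - z)) * exp (-α * z)
      = exp (-α * c) - exp (β * (a - c)) * exp (-α * a) := by
  have factor : ∀ z, exp (-β * (c - z)) * exp (-α * z) = exp (-β * c) * exp ((β - α) * z) :=
    fun z ↦ by simp only [← exp_add]; ring_nf
  simp only [factor, intervalIntegral.integral_const_mul]
  rw [mul_left_comm, intervalIntegral.mul_integral_comp_mul_left, integral_exp, mul_sub]
  simp only [← exp_add]
  ring_nf

theorem integral_eq_sub_of_eqOn_Ioo {E : Type*} [NormedAddCommGroup E] [NormedSpace ℝ E]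
    {μ : Measure ℝ} [NullSingletonClass μ] {g p r : ℝ → E} {a m c : ℝ} (hm : m ∈ Icc a c)
    (hp : IntervalIntegrable p μ a c) (hr : IntervalIntegrable r μ a m)
    (hleft : EqOn g (fun z ↦ p z - r z) (Ioo a m)) (hright : EqOn g p (Ioo m c)) :
    ∫ z in a..c, g z ∂μ = (∫ z in a..c, p z ∂μ) - ∫ z in a..m, r z ∂μ := by
  rw [← uIoo_of_le hm.1] at hleft
  rw [← uIoo_of_le hm.2] at hright
  have m_mem : m ∈ uIcc a c := Icc_subset_uIcc hm
  have hp₁ : IntervalIntegrable p μ a m := hp.mono_set (uIcc_subset_uIcc_left m_mem)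
  have hp₂ : IntervalIntegrable p μ m c := hp.mono_set (uIcc_subset_uIcc_right m_mem)
  rw [← intervalIntegral.integral_add_adjacent_intervals
      ((hp₁.sub hr).congr_uIoo hleft.symm) (hp₂.congr_uIoo hright.symm),
    ← intervalIntegral.integral_add_adjacent_intervals hp₁ hp₂,
    intervalIntegral.integral_congr_uIoo hleft, intervalIntegral.integral_congr_uIoo hright,
    intervalIntegral.integral_sub hp₁ hr]
  abel

/-- The Volterra operator `T` of the second kind with exponential kernel and terminal point `m`,
applied to `v`. With `α = Φ`, `β = φ`, `m = 0` and `v(z) = 𝕎(-z)` it is the function `f` of the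
theorem. -/
noncomputable def expVolterra (α β m : ℝ) (v : ℝ → ℝ) (t : ℝ) : ℝ :=
  v t + (α - β) * ∫ z in t..m, exp (-α * (t - z)) * v z

section ExpVolterra

variable {v g : ℝ → ℝ} {C D a m c : ℝ}

theorem exp_mul_expVolterra (α β t : ℝ) :
    exp (β * (t - a)) * expVolterra α β m v t
      = exp ((β - α) * (t - a)) * (exp (α * (t - a)) * v t)
        - (β - α) * exp ((β - α) * (t - a)) * ∫ z in t..m, exp (α * (z - a)) * v z := by
  have tail : exp (β * (t - a)) * ∫ z in t..m, exp (-α * (t - z)) * v z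
      = exp ((β - α) * (t - a)) * ∫ z in t..m, exp (α * (z - a)) * v z := by
    simp only [← intervalIntegral.integral_const_mul, ← mul_assoc, ← exp_add]
    ring_nf
  have head : exp (β * (t - a)) = exp ((β - α) * (t - a)) * exp (α * (t - a)) := by
    rw [← exp_add]; ring_nf
  rw [expVolterra]
  linear_combination (α - β) * tail + v t * head

theorem intervalIntegrable_exp_mul_expVolterra (α β : ℝ)
    (hv : IntervalIntegrable v volume a m) :
    IntervalIntegrable (fun z ↦ exp (β * (z - a)) * expVolterra α β m v z) volume a m := by
  have hh : IntervalIntegrable (fun z ↦ exp (α * (z - a)) * v z) volume a m :=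
    hv.continuousOn_mul (by fun_prop)
  have tail : ContinuousOn (fun t ↦ ∫ z in t..m, exp (α * (z - a)) * v z) (uIcc a m) := by
    simp only [intervalIntegral.integral_symm m]
    exact (intervalIntegral.continuousOn_primitive_interval' hh right_mem_uIcc).neg
  simp only [exp_mul_expVolterra]
  exact (hh.continuousOn_mul (by fun_prop)).sub
    (ContinuousOn.intervalIntegrable (by fun_prop))

theorem integral_exp_mul_expVolterra (α β : ℝ) (hv : IntervalIntegrable v volume a m) :
    ∫ z in a..m, exp (β * (z - a)) * expVolterra α β m v z
      = ∫ z in a..m, exp (α * (z - a)) * v z := by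
  let u : ℝ → ℝ := fun z ↦ exp ((β - α) * (z - a))
  have hu : AbsolutelyContinuousOnInterval u a m :=
    ContDiffOn.absolutelyContinuousOnInterval (by fun_prop)
  have deriv_u : ∀ z, deriv u z = (β - α) * u z := fun z ↦ by
    simpa [u, mul_comm] using (((hasDerivAt_id z).sub_const a).const_mul (β - α)).exp.deriv
  have hh : IntervalIntegrable (fun z ↦ exp (α * (z - a)) * v z) volume a m :=
    hv.continuousOn_mul (by fun_prop)
  calc ∫ z in a..m, exp (β * (z - a)) * expVolterra α β m v z
      = ∫ z in a..m, (u z * (exp (α * (z - a)) * v z)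
          - deriv u z * ∫ s in z..m, exp (α * (s - a)) * v s) := by
        simp only [exp_mul_expVolterra, deriv_u, u]
    _ = u a * ∫ z in a..m, exp (α * (z - a)) * v z := integral_mul_sub_deriv_mul_integral hu hh
    _ = ∫ z in a..m, exp (α * (z - a)) * v z := by
        simp only [u, sub_self, mul_zero, exp_zero, one_mul]

theorem integral_exp_mul_of_eq_exp_sub_expVolterra {α β : ℝ}
    (hm : m ∈ Icc a c) (hv : IntervalIntegrable v volume a m)
    (hleft : ∀ z < m, g z = C * exp (-α * z) - D * expVolterra α β m v z)
    (hright : ∀ z, m ≤ z → g z = C * exp (-α * z)) :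
    ∫ z in a..c, exp (-β * (c - z)) * g z
      = C * (∫ z in a..c, exp (-β * (c - z)) * exp (-α * z))
        - D * exp (β * (a - c)) * ∫ z in a..m, exp (α * (z - a)) * v z := by
  have weight : ∀ z, exp (-β * (c - z)) = exp (β * (a - c)) * exp (β * (z - a)) := fun z ↦ by
    rw [← exp_add]; ring_nf
  have transform : ∫ z in a..m, D * (exp (-β * (c - z)) * expVolterra α β m v z)
      = D * exp (β * (a - c)) * ∫ z in a..m, exp (α * (z - a)) * v z := by
    simp only [weight, mul_assoc, intervalIntegral.integral_const_mul,
      integral_exp_mul_expVolterra α β hv]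
  rw [← transform, ← intervalIntegral.integral_const_mul C]
  refine integral_eq_sub_of_eqOn_Ioo hm (Continuous.intervalIntegrable (by fun_prop) _ _) ?_
    (fun z hz ↦ ?_) (fun z hz ↦ ?_)
  · simp only [weight, mul_assoc]
    exact ((intervalIntegrable_exp_mul_expVolterra α β hv).const_mul _).const_mul _
  · simp only [hleft z hz.2]
    ring
  · simp only [hright z hz.1.le]
    ring

theorem add_integral_exp_mul_of_eq_exp_sub_expVolterra {α β : ℝ}
    (hm : m ∈ Icc a c) (hv : IntervalIntegrable v volume a m)
    (hleft : ∀ z < m, g z = C * exp (-α * z) - D * expVolterra α β m v z)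
    (hright : ∀ z, m ≤ z → g z = C * exp (-α * z)) :
    g c + (α - β) * ∫ z in a..c, exp (-β * (c - z)) * g z
      = exp (β * (a - c)) * exp (-α * a)
        * (C + (β - α) * D * ∫ z in a..m, exp (α * z) * v z) := by
  have shift : ∫ z in a..m, exp (α * (z - a)) * v z
      = exp (-α * a) * ∫ z in a..m, exp (α * z) * v z := by
    have exp_shift : ∀ z, exp (α * (z - a)) = exp (-α * a) * exp (α * z) := fun z ↦ by
      rw [← exp_add]; ring_nf
    simp only [exp_shift, mul_assoc, intervalIntegral.integral_const_mul]
  rw [integral_exp_mul_of_eq_exp_sub_expVolterra hm hv hleft hright, hright c hm.2, shift]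
  linear_combination -C * sub_mul_integral_exp_mul_exp α β a c

end ExpVolterra

theorem intervalIntegrable_comp_neg_of_locallyIntegrableOn_Ici {E : Type*}
    [NormedAddCommGroup E] {w : ℝ → E} (hw : LocallyIntegrableOn w (Ici 0)) {a : ℝ} (ha : a ≤ 0) :
    IntervalIntegrable (fun z ↦ w (-z)) volume a 0 := by
  have neg_a_nonneg : 0 ≤ -a := neg_nonneg.2 ha
  have hw_Icc : IntegrableOn w (Icc 0 (-a)) :=
    hw.integrableOn_compact_subset Icc_subset_Ici_self isCompact_Icc
  rw [← uIcc_of_le neg_a_nonneg] at hw_Icc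
  simpa using ((IntervalIntegrable.iff_comp_neg (by finiteness)).1 hw_Icc.intervalIntegrable).symm

theorem stmt8_general (q δ Φ φ : ℝ) (hδ : δ ≠ 0) (hΦ : Φ ≠ 0) (hφ : φ ≠ 0)
    (𝕎 : ℝ → ℝ) (h𝕎 : LocallyIntegrableOn 𝕎 (Ici 0))
    (f : ℝ → ℝ)
    (hf : ∀ t ≤ (0 : ℝ),
      f t = 𝕎 (-t) + (Φ - φ) * ∫ z in t..(0 : ℝ), exp (-Φ * (t - z)) * 𝕎 (-z))
    (k : ℝ → ℝ)
    (hk₁ : ∀ z : ℝ, 0 ≤ z → k z = (q * (φ - Φ) / (φ * δ)) * exp (-Φ * z))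
    (hk₂ : ∀ z : ℝ, z < 0 →
      k z = (q * (φ - Φ) / (φ * δ)) * exp (-Φ * z) - (q * Φ / φ) * f z) :
    ∀ b x y : ℝ, b ≤ x → x ≤ y →
      (φ / Φ) * k (y - x)
        + ∫ z in (b - x)..(y - x), (φ * (Φ - φ) / Φ) * exp (-φ * (y - x - z)) * k z
        = (q * (φ - Φ) / (δ * Φ)) * exp (φ * (b - y)) * exp (Φ * (x - b))
            * (1 + δ * Φ * ∫ z in (b - x)..(0 : ℝ), exp (Φ * z) * 𝕎 (-z)) := by
  intro b x y hbx hxy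
  obtain ⟨a, ha⟩ : ∃ a, a = b - x := ⟨_, rfl⟩
  obtain ⟨c, hc⟩ : ∃ c, c = y - x := ⟨_, rfl⟩
  have zero_mem : (0 : ℝ) ∈ Icc a c := ⟨by linarith, by linarith⟩
  have hv : IntervalIntegrable (fun z ↦ 𝕎 (-z)) volume a 0 :=
    intervalIntegrable_comp_neg_of_locallyIntegrableOn_Ici h𝕎 zero_mem.1
  have resolvent := add_integral_exp_mul_of_eq_exp_sub_expVolterra zero_mem hv
    (fun z hz ↦ by rw [hk₂ z hz, hf z hz.le]; rfl) hk₁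
  have hbxy : φ * (b - y) = φ * (a - c) := by rw [ha, hc]; ring
  have hxb : Φ * (x - b) = -Φ * a := by rw [ha]; ring
  simp only [← ha, ← hc, hbxy, hxb, mul_assoc (φ * (Φ - φ) / Φ),
    intervalIntegral.integral_const_mul]
  calc φ / Φ * k c + φ * (Φ - φ) / Φ * ∫ z in a..c, exp (-φ * (c - z)) * k z
      = φ / Φ * (k c + (Φ - φ) * ∫ z in a..c, exp (-φ * (c - z)) * k z) := by ring
    _ = q * (φ - Φ) / (δ * Φ) * exp (φ * (a - c)) * exp (-Φ * a)
          * (1 + δ * Φ * ∫ z in a..0, exp (Φ * z) * 𝕎 (-z)) := by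
      rw [resolvent]
      field_simp

/-- Identity (3.7) of the paper: the case `b ≤ x ≤ y`. -/
theorem stmt8 (q δ Φ φ : ℝ) (hq : 0 < q) (hδ : 0 < δ) (hΦ : 0 < Φ) (hΦφ : Φ < φ)
    (𝕎 : ℝ → ℝ)
    (h𝕎0 : ∀ u < (0 : ℝ), 𝕎 u = 0)
    (h𝕎c : ContinuousOn 𝕎 (Set.Ici (0 : ℝ)))
    (f : ℝ → ℝ)
    (hf : ∀ t ≤ (0 : ℝ),
      f t = 𝕎 (-t) + (Φ - φ) * ∫ z in t..(0 : ℝ), Real.exp (-Φ * (t - z)) * 𝕎 (-z))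
    (k : ℝ → ℝ)
    (hk₁ : ∀ z : ℝ, 0 ≤ z → k z = (q * (φ - Φ) / (φ * δ)) * Real.exp (-Φ * z))
    (hk₂ : ∀ z : ℝ, z < 0 →
      k z = (q * (φ - Φ) / (φ * δ)) * Real.exp (-Φ * z) - (q * Φ / φ) * f z) :
    ∀ b x y : ℝ, b ≤ x → x ≤ y →
      (φ / Φ) * k (y - x)
        + ∫ z in (b - x)..(y - x),
            (φ * (Φ - φ) / Φ) * Real.exp (-φ * (y - x - z)) * k z
        = (q * (φ - Φ) / (δ * Φ)) * Real.exp (φ * (b - y)) * Real.exp (Φ * (x - b))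
            * (1 + δ * Φ * ∫ z in (b - x)..(0 : ℝ), Real.exp (Φ * z) * 𝕎 (-z)) := by
  exact stmt8_general q δ Φ φ hδ.ne' hΦ.ne' (hΦ.trans hΦφ).ne' 𝕎
    (h𝕎c.locallyIntegrableOn measurableSet_Ici) f hf k hk₁ hk₂
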